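/- Let F : R^M → R^M be C^2, σ : R^M → R be C^3, fix x ∈ R^M and w ∈ R^M. Then, as t → 0⁺, the spatial gradient of the log Jacobian determinant of one Euler step satisfies ∇_x log det(I + t DF(x) + √t · w (∇σ(x))^T) = √t ∇²σ(x) w + t ( ∇(div F)(x) − ⟨∇σ(x), w⟩ ∇²σ(x) w ) + o(t) in R^M. -/

import Mathlib

open Matrix Filter Topology

/-- the gradient (column vector of partial derivatives) of a scalar function on `ℝ^M` -/
noncomputable def grad {M : ℕ} (φ : (Fin M → ℝ) → ℝ) (x : Fin M → ℝ) : Fin M → ℝ :=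
  fun j => fderiv ℝ φ x (Pi.single j 1)

/-- the Jacobian matrix of a map `ℝ^M → ℝ^M` -/
noncomputable def jac {M : ℕ} (F : (Fin M → ℝ) → (Fin M → ℝ)) (x : Fin M → ℝ) :
    Matrix (Fin M) (Fin M) ℝ :=
  Matrix.of fun i j => fderiv ℝ F x (Pi.single j 1) i

/-!
Put `s = √t` and `B(s, y) = I + s² DF(y) + s w ∇σ(y)ᵀ`. By Jacobi's formula
`∂ⱼ log det B = tr(B⁻¹ ∂ⱼB) = s · tr(B⁻¹ (X + s P))`, where `X = w (∂ⱼ∇σ)ᵀ` and `P = ∂ⱼDF`.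
The last trace is differentiable at `s = 0`, where it has value `tr X` and derivative
`tr P - tr(w ∇σᵀ X)`, so the expansion to order `s² = t` only needs the first derivative of matrix
inversion at `I`. Finally `tr X` is the `j`-th entry of `wᵀ ∇²σ`, which is that of `∇²σ w` by
symmetry of the Hessian.
-/

open Asymptotics

section Determinant

variable {n : Type*} [Fintype n] [DecidableEq n]

lemma sum_det_updateRow {R : Type*} [CommRing R] (A X : Matrix n n R) :
    ∑ i, (A.updateRow i (X i)).det = (A.adjugate * X).trace := by
  rw [trace_mul_comm, trace]
  refine Finset.sum_congr rfl fun i _ => ?_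
  rw [← cramer_transpose_apply, cramer_eq_adjugate_mulVec, ← adjugate_transpose,
    mulVec_transpose, diag_apply, mul_apply_eq_vecMul]

lemma hasFDerivAt_det {𝕜 : Type*} [NontriviallyNormedField 𝕜] [CompleteSpace 𝕜]
    (A : Matrix n n 𝕜) :
    HasFDerivAt (det : Matrix n n 𝕜 → 𝕜)
      (LinearMap.toContinuousLinearMap
        (traceLinearMap n 𝕜 𝕜 ∘ₗ LinearMap.mulLeft 𝕜 A.adjugate)) A := by
  let detMultilinear : ContinuousMultilinearMap 𝕜 (fun _ : n => n → 𝕜) 𝕜 :=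
    { (detRowAlternating (n := n) (R := 𝕜)).toMultilinearMap with
      cont := (continuous_id.matrix_det : Continuous fun B : Matrix n n 𝕜 => B.det) }
  refine (detMultilinear.hasFDerivAt (x := A)).congr_fderiv ?_
  ext X
  exact (detMultilinear.linearDeriv_apply A X).trans (sum_det_updateRow A X)

end Determinant

lemma hasDerivAt_ringInverse_mul_of_eq_one {𝕜 R : Type*} [NontriviallyNormedField 𝕜] [NormedRing R]
    [NormedAlgebra 𝕜 R] [HasSummableGeomSeries R] {γ ξ : 𝕜 → R} {γ' ξ' : R} {s : 𝕜}
    (hγ : HasDerivAt γ γ' s) (hγs : γ s = 1) (hξ : HasDerivAt ξ ξ' s) :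
    HasDerivAt (fun r => Ring.inverse (γ r) * ξ r) (ξ' - γ' * ξ s) s := by
  have hinv := hasFDerivAt_ringInverse (𝕜 := 𝕜) (1 : Rˣ)
  rw [Units.val_one, ← hγs] at hinv
  refine ((hinv.comp_hasDerivAt s hγ).mul hξ).congr_deriv ?_
  simp [hγs, sub_eq_neg_add]

section LogDet

open scoped Matrix.Norms.Operator

variable {n : Type*} [Fintype n]

lemma hasDerivAt_trace_inv_mul [DecidableEq n] (A C P X : Matrix n n ℝ) :
    HasDerivAt (fun s : ℝ => ((1 + s ^ 2 • A + s • C)⁻¹ * (X + s • P)).trace)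
      (P.trace - (C * X).trace) 0 := by
  have hbase : HasDerivAt (fun s : ℝ => 1 + s ^ 2 • A + s • C) C 0 :=
    ((((hasDerivAt_pow 2 (0 : ℝ)).smul_const A).const_add 1).add
      ((hasDerivAt_id 0).smul_const C)).congr_deriv (by simp)
  have hfactor : HasDerivAt (fun s : ℝ => X + s • P) P 0 :=
    (((hasDerivAt_id 0).smul_const P).const_add X).congr_deriv (one_smul ℝ P)
  have hprod := hasDerivAt_ringInverse_mul_of_eq_one hbase (by simp) hfactor
  simp only [nonsing_inv_eq_ringInverse, zero_smul, add_zero, ← trace_sub] at hprod ⊢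
  exact (traceLinearMap n ℝ ℝ).toContinuousLinearMap.hasFDerivAt.comp_hasDerivAt 0 hprod

lemma eventually_det_one_add_ne_zero [DecidableEq n] (A C : Matrix n n ℝ) :
    ∀ᶠ s : ℝ in 𝓝 0, (1 + s ^ 2 • A + s • C).det ≠ 0 := by
  have hcont : Continuous fun s : ℝ => (1 + s ^ 2 • A + s • C).det := by fun_prop
  exact hcont.continuousAt.eventually_ne (by simp)

variable {E : Type*} [NormedAddCommGroup E] [NormedSpace ℝ E] {x : E}

lemma fderiv_trace {B : E → Matrix n n ℝ} {B' : E →L[ℝ] Matrix n n ℝ}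
    (hB : HasFDerivAt B B' x) (v : E) :
    fderiv ℝ (fun y => (B y).trace) x v = (B' v).trace := by
  have htrace : HasFDerivAt (fun y => (B y).trace) _ x :=
    (traceLinearMap n ℝ ℝ).toContinuousLinearMap.hasFDerivAt.comp x hB
  rw [htrace.fderiv]
  rfl

lemma hasFDerivAt_vecMulVec {k l : Type*} [Finite k] [Finite l] (w : k → ℝ) {g : E → l → ℝ}
    {g' : E →L[ℝ] l → ℝ} (hg : HasFDerivAt g g' x) :
    HasFDerivAt (fun y => vecMulVec w (g y))
      ((vecMulVecBilin ℝ ℝ w).toContinuousLinearMap ∘L g') x := by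
  cases nonempty_fintype k
  cases nonempty_fintype l
  exact HasFDerivAt.comp (g := vecMulVecBilin ℝ ℝ w) x
    (vecMulVecBilin ℝ ℝ w).toContinuousLinearMap.hasFDerivAt hg

variable [DecidableEq n]

lemma fderiv_log_det {B : E → Matrix n n ℝ} {B' : E →L[ℝ] Matrix n n ℝ}
    (hB : HasFDerivAt B B' x) (hdet : (B x).det ≠ 0) (v : E) :
    fderiv ℝ (fun y => Real.log (B y).det) x v = ((B x)⁻¹ * B' v).trace := by
  have hdetB : HasFDerivAt (fun y => (B y).det) _ x := (hasFDerivAt_det (B x)).comp x hB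
  rw [(hdetB.log hdet).fderiv, inv_def, Ring.inverse_eq_inv', smul_mul_assoc, trace_smul]
  rfl

lemma isLittleO_fderiv_log_det {A C : E → Matrix n n ℝ} {A' C' : E →L[ℝ] Matrix n n ℝ}
    (hA : HasFDerivAt A A' x) (hC : HasFDerivAt C C' x) (v : E) :
    (fun s : ℝ => fderiv ℝ (fun y => Real.log (1 + s ^ 2 • A y + s • C y).det) x v
        - (s * (C' v).trace + s ^ 2 * ((A' v).trace - (C x * C' v).trace)))
      =o[𝓝 0] fun s => s ^ 2 := by
  have hderiv (s : ℝ) : HasFDerivAt (fun y => 1 + s ^ 2 • A y + s • C y) (s ^ 2 • A' + s • C') x :=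
    ((hA.const_smul (s ^ 2)).const_add 1).add (hC.const_smul s)
  have hfactor (s : ℝ) : (s ^ 2 • A' + s • C') v = s • (C' v + s • A' v) := by
    simp [smul_smul, pow_two, add_comm]
  have htrace := (hasDerivAt_trace_inv_mul (A x) (C x) (A' v) (C' v)).isLittleO
  refine ((isBigO_refl (fun s : ℝ => s) (𝓝 0)).mul_isLittleO htrace).congr' ?_ ?_
  · filter_upwards [eventually_det_one_add_ne_zero (A x) (C x)] with s hs
    rw [fderiv_log_det (hderiv s) hs, hfactor, mul_smul_comm, trace_smul]
    simp only [zero_smul, add_zero, sub_zero, smul_eq_mul, inv_one, one_mul, ne_eq,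
      OfNat.ofNat_ne_zero, not_false_eq_true, zero_pow]
    ring
  · simp [pow_two]

lemma isLittleO_fderiv_log_det_vecMulVec {A : E → Matrix n n ℝ} {A' : E →L[ℝ] Matrix n n ℝ}
    {g : E → n → ℝ} {g' : E →L[ℝ] n → ℝ} (hA : HasFDerivAt A A' x) (hg : HasFDerivAt g g' x)
    (w : n → ℝ) (v : E) :
    (fun s : ℝ => fderiv ℝ (fun y => Real.log (1 + s ^ 2 • A y + s • vecMulVec w (g y)).det) x v
        - (s * (w ⬝ᵥ g' v) + s ^ 2 * ((A' v).trace - (g x ⬝ᵥ w) * (w ⬝ᵥ g' v))))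
      =o[𝓝 0] fun s => s ^ 2 := by
  simpa [vecMulVecBilin, vecMulVec_mul_vecMulVec, vecMulVec_smul, trace_vecMulVec] using
    isLittleO_fderiv_log_det hA (hasFDerivAt_vecMulVec w hg) v

end LogDet

lemma differentiableAt_fderiv {𝕜 E F : Type*} [NontriviallyNormedField 𝕜] [NormedAddCommGroup E]
    [NormedSpace 𝕜 E] [NormedAddCommGroup F] [NormedSpace 𝕜 F] {f : E → F} {x : E}
    (hf : ContDiffAt 𝕜 2 f x) : DifferentiableAt 𝕜 (fderiv 𝕜 f) x :=
  (hf.fderiv_right (m := 1) (by norm_num)).differentiableAt one_ne_zero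

section VectorField

open scoped Matrix.Norms.Operator

variable {M : ℕ} {x : Fin M → ℝ}

lemma differentiableAt_jac {F : (Fin M → ℝ) → (Fin M → ℝ)}
    (hF : DifferentiableAt ℝ (fderiv ℝ F) x) : DifferentiableAt ℝ (jac F) x := by
  refine differentiableAt_pi.2 fun i => differentiableAt_pi.2 fun j => ?_
  exact differentiableAt_pi.1 (hF.clm_apply (differentiableAt_const (Pi.single j 1))) i

lemma hasFDerivAt_grad {σ : (Fin M → ℝ) → ℝ} (hσ : DifferentiableAt ℝ (fderiv ℝ σ) x) :
    HasFDerivAt (grad σ)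
      (.pi fun j => (fderiv ℝ (fderiv ℝ σ) x).flip (Pi.single j 1)) x :=
  hasFDerivAt_pi.2 fun j =>
    (ContinuousLinearMap.apply ℝ ℝ (Pi.single j 1)).hasFDerivAt.comp (f := fderiv ℝ σ) x
      hσ.hasFDerivAt

lemma isSymm_jac_grad {σ : (Fin M → ℝ) → ℝ} (hσ : ContDiffAt ℝ 2 σ x) :
    (jac (grad σ) x).IsSymm := by
  ext i j
  simpa [jac, (hasFDerivAt_grad (differentiableAt_fderiv hσ)).fderiv] using
    hσ.isSymmSndFDerivAt (by simp) (Pi.single i 1) (Pi.single j 1)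

lemma isLittleO_grad_log_det_vecMulVec {A : (Fin M → ℝ) → Matrix (Fin M) (Fin M) ℝ}
    {g : (Fin M → ℝ) → (Fin M → ℝ)} (hA : DifferentiableAt ℝ A x) (hg : DifferentiableAt ℝ g x)
    (w : Fin M → ℝ) :
    (fun t : ℝ => grad (fun y => Real.log (1 + t • A y + √t • vecMulVec w (g y)).det) x
        - (√t • (w ᵥ* jac g x)
          + t • (grad (fun y => (A y).trace) x - (g x ⬝ᵥ w) • (w ᵥ* jac g x))))
      =o[𝓝[>] 0] fun t => t := by
  refine isLittleO_pi.2 fun j => ?_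
  have hsqrt : Tendsto Real.sqrt (𝓝[>] 0) (𝓝 0) :=
    (Real.continuous_sqrt.tendsto' 0 0 Real.sqrt_zero).mono_left nhdsWithin_le_nhds
  have hsq : ∀ᶠ t : ℝ in 𝓝[>] 0, √t ^ 2 = t :=
    eventually_mem_nhdsWithin.mono fun t ht => Real.sq_sqrt (le_of_lt ht)
  have hexp := (isLittleO_fderiv_log_det_vecMulVec hA.hasFDerivAt hg.hasFDerivAt w
    (Pi.single j 1)).comp_tendsto hsqrt
  refine hexp.congr' ?_ hsq
  filter_upwards [hsq] with t ht
  simp only [Function.comp_apply, ht, ← fderiv_trace hA.hasFDerivAt]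
  rfl

end VectorField

theorem grad_logdet_euler_step_expansion_general {M : ℕ}
    {F : (Fin M → ℝ) → (Fin M → ℝ)} {σ : (Fin M → ℝ) → ℝ} {x : Fin M → ℝ}
    (hF : ContDiffAt ℝ 2 F x) (hσ : ContDiffAt ℝ 2 σ x) (w : Fin M → ℝ) :
    Tendsto (fun t : ℝ =>
      ‖grad (fun y => Real.log (((1 : Matrix (Fin M) (Fin M) ℝ)
            + t • jac F y + Real.sqrt t • vecMulVec w (grad σ y)).det)) x
        - (Real.sqrt t • (jac (fun y => grad σ y) x *ᵥ w)
            + t • (grad (fun y => (jac F y).trace) x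
                - (grad σ x ⬝ᵥ w) • (jac (fun y => grad σ y) x *ᵥ w)))‖ / t)
      (nhdsWithin 0 (Set.Ioi 0)) (nhds 0) := by
  have hjac := differentiableAt_jac (differentiableAt_fderiv hF)
  have hgrad := (hasFDerivAt_grad (differentiableAt_fderiv hσ)).differentiableAt
  have hvecMul : w ᵥ* jac (grad σ) x = jac (grad σ) x *ᵥ w := by
    rw [← mulVec_transpose, (isSymm_jac_grad hσ).eq]
  have hexp := isLittleO_grad_log_det_vecMulVec hjac hgrad w
  rw [hvecMul] at hexp
  exact hexp.norm_left.tendsto_div_nhds_zero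

/-- the spatial gradient of the log Jacobian determinant of one Euler step:
`∇ₓ log det(I + t DF(x) + √t·w (∇σ(x))ᵀ)
  = √t ∇²σ(x) w + t (∇(div F)(x) − ⟨∇σ(x), w⟩ ∇²σ(x) w) + o(t)` as `t → 0⁺`. -/
theorem grad_logdet_euler_step_expansion (M : ℕ)
    (F : (Fin M → ℝ) → (Fin M → ℝ)) (σ : (Fin M → ℝ) → ℝ)
    (hF : ContDiff ℝ 2 F) (hσ : ContDiff ℝ 3 σ) (x w : Fin M → ℝ) :
    Tendsto (fun t : ℝ =>
      ‖grad (fun y => Real.log (((1 : Matrix (Fin M) (Fin M) ℝ)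
            + t • jac F y + Real.sqrt t • vecMulVec w (grad σ y)).det)) x
        - (Real.sqrt t • (jac (fun y => grad σ y) x *ᵥ w)
            + t • (grad (fun y => (jac F y).trace) x
                - (grad σ x ⬝ᵥ w) • (jac (fun y => grad σ y) x *ᵥ w)))‖ / t)
      (nhdsWithin 0 (Set.Ioi 0)) (nhds 0) := by
  exact grad_logdet_euler_step_expansion_general hF.contDiffAt
    (hσ.of_le (by norm_num)).contDiffAt w
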